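/- Let w be a 7/3-power-free finite binary word with |w| ≥ 52. Then w contains both μ³(0) = 01101001 and μ³(1) = 10010110 as subwords. -/

import Mathlib

/-- The Thue–Morse morphism `μ` on a single letter (`false` = 0, `true` = 1):
`μ(0) = 01`, `μ(1) = 10`. -/
def muLetter : Bool → List Bool
  | false => [false, true]
  | true  => [true, false]

/-- The Thue–Morse morphism `μ` on binary words. -/
def mu (w : List Bool) : List Bool := (w.map muLetter).flatten

/-- `z` is a `β`-power (for a rational `β`): `z = xⁿx'` with `x'` a prefix of `x`
and `n + |x'|/|x| = β`. -/
def IsPower (β : ℚ) (z : List Bool) : Prop :=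
  ∃ (n : ℕ) (x x' : List Bool), x ≠ [] ∧ x' <+: x ∧
    z = (List.replicate n x).flatten ++ x' ∧
    (n : ℚ) + (x'.length : ℚ) / (x.length : ℚ) = β

/-- The finite word `w` is `α`-power-free: no subword (contiguous factor) of `w`
is a `β`-power for any rational `β ≥ α`. -/
def PowerFree (α : ℝ) (w : List Bool) : Prop :=
  ∀ z : List Bool, z <:+: w → ∀ β : ℚ, α ≤ (β : ℝ) → ¬ IsPower β z

/-- The finite word `w` contains an `α`-power: some subword of `w` is a
`β`-power for some rational `β ≥ α`. -/
def ContainsPower (α : ℝ) (w : List Bool) : Prop :=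
  ∃ z : List Bool, z <:+: w ∧ ∃ β : ℚ, α ≤ (β : ℝ) ∧ IsPower β z

/-- `z` is a (finite) subword of the infinite word `w : ℕ → Bool`. -/
def InfSubword (z : List Bool) (w : ℕ → Bool) : Prop :=
  ∃ i : ℕ, z = (List.range z.length).map fun k => w (i + k)

/-- The infinite word `w` is `α`-power-free. -/
def PowerFreeInf (α : ℝ) (w : ℕ → Bool) : Prop :=
  ∀ z : List Bool, InfSubword z w → ∀ β : ℚ, α ≤ (β : ℝ) → ¬ IsPower β z

/-- The infinite word `w` contains an `α`-power. -/
def ContainsPowerInf (α : ℝ) (w : ℕ → Bool) : Prop :=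
  ∃ z : List Bool, InfSubword z w ∧ ∃ β : ℚ, α ≤ (β : ℝ) ∧ IsPower β z

/-- The length-`n` prefix of an infinite word. -/
def wordPrefix (w : ℕ → Bool) (n : ℕ) : List Bool := (List.range n).map w

/-- `h : Σ₂* → Σ₂*` is a morphism. -/
def IsMorphism (h : List Bool → List Bool) : Prop :=
  ∀ x y : List Bool, h (x ++ y) = h x ++ h y

/-- A morphism is non-erasing if it erases neither letter. -/
def NonErasing (h : List Bool → List Bool) : Prop :=
  h [false] ≠ [] ∧ h [true] ≠ []

/-- The infinite word `u` is the image of the infinite word `w` under the morphism `h`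
(obtained by concatenating the images of the letters of `w`): every `h(w[0..n))` is a
prefix of `u`, and these prefixes exhaust `u`. -/
def IsMorphImage (h : List Bool → List Bool) (w u : ℕ → Bool) : Prop :=
  (∀ n : ℕ, wordPrefix u (h (wordPrefix w n)).length = h (wordPrefix w n)) ∧
  ∀ m : ℕ, ∃ n : ℕ, m ≤ (h (wordPrefix w n)).length

/-- The complementation morphism `E` : `E(0) = 1`, `E(1) = 0`. -/
def eMorph (w : List Bool) : List Bool := w.map fun b => !b

/-- The Thue–Morse word `μ^ω(0)` (`tm n` = parity of the binary digit sum of `n`). -/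
def tm (n : ℕ) : Bool := (Nat.digits 2 n).sum % 2 == 1

/-- `μ³(0) = 01101001`. -/
def w01101001 : List Bool := [false, true, true, false, true, false, false, true]

/-- `μ³(1) = 10010110`. -/
def w10010110 : List Bool := [true, false, false, true, false, true, true, false]

/-!
Let `w` be a `7/3`-power-free word. Between consecutive doubled letters `w` alternates, and it has
no factor `ababa`, so two of them at an odd distance can only come from a cube `aaa` or from
`aabaa`; an occurrence of `aabaa` that is neither a prefix nor a suffix of `w` extends to a cube
or to the `7/3`-power `baabaab`. Hence, apart from the two end letters of `w`, all doubled letters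
sit at positions of the same parity, and cutting between the letters of each pair gives
`w = x μ(y) z` with `|x|, |z| ≤ 2`. The word `y` is again `7/3`-power-free, so this can be
repeated: a length of at least `7 · 2^(k+1) - 4` drops to at least `7 · 2^k - 4`. After `k` rounds
at least `3` letters are left, and these are not all equal. For `k = 3` the initial length is
`7 · 8 - 4 = 52`.
-/

theorem mu_nil : mu [] = [] := rfl

theorem mu_cons (a : Bool) (w : List Bool) : mu (a :: w) = a :: (!a) :: mu w := by
  cases a <;> rfl

theorem mu_append (u v : List Bool) : mu (u ++ v) = mu u ++ mu v := by
  simp [mu]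

theorem mu_flatten_replicate (n : ℕ) (x : List Bool) :
    mu (List.replicate n x).flatten = (List.replicate n (mu x)).flatten := by
  induction n with
  | zero => rfl
  | succ n ih => simp only [List.replicate_succ, List.flatten_cons, mu_append, ih]

theorem length_mu (w : List Bool) : (mu w).length = 2 * w.length := by
  induction w with
  | nil => rfl
  | cons a w ih => simp only [mu_cons, List.length_cons, ih]; ring

theorem mu_isPrefix_mu {u v : List Bool} (h : u <+: v) : mu u <+: mu v := by
  obtain ⟨t, rfl⟩ := h
  exact ⟨mu t, (mu_append u t).symm⟩

theorem mu_isInfix_mu {u v : List Bool} (h : u <:+: v) : mu u <:+: mu v := by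
  obtain ⟨s, t, rfl⟩ := h
  exact ⟨mu s, mu t, by simp only [mu_append]⟩

theorem IsPower.map_mu {β : ℚ} {z : List Bool} (h : IsPower β z) : IsPower β (mu z) := by
  obtain ⟨n, x, x', hx, hx', rfl, rfl⟩ := h
  refine ⟨n, mu x, mu x', ?_, mu_isPrefix_mu hx', ?_, ?_⟩
  · exact fun hmu ↦ hx (by simpa [length_mu] using congrArg List.length hmu)
  · rw [mu_append, mu_flatten_replicate]
  · push_cast [length_mu]
    rw [mul_div_mul_left _ _ two_ne_zero]

namespace PowerFree

variable {α : ℝ} {w : List Bool}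

theorem of_isInfix {u : List Bool} (hw : PowerFree α w) (hu : u <:+: w) : PowerFree α u :=
  fun z hz ↦ hw z (hz.trans hu)

theorem of_mu (hw : PowerFree α (mu w)) : PowerFree α w :=
  fun z hz β hβ hpow ↦ hw (mu z) (mu_isInfix_mu hz) β hβ hpow.map_mu

theorem not_overlap_isInfix (hw : PowerFree α w) (a : Bool) (s : List Bool)
    (hα : α ≤ 2 + 1 / (s.length + 1)) : ¬ (a :: s) ++ (a :: s) ++ [a] <:+: w := by
  refine fun h ↦ hw _ h (2 + 1 / (s.length + 1)) (by push_cast; exact hα)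
    ⟨2, a :: s, [a], List.cons_ne_nil a s, ⟨s, rfl⟩, ?_, ?_⟩
  · simp [List.replicate_succ]
  · simp

theorem not_short_overlap_isInfix (hw : PowerFree (7 / 3) w) (a : Bool) {s : List Bool}
    (hs : s.length ≤ 2) : ¬ (a :: s) ++ (a :: s) ++ [a] <:+: w := by
  apply hw.not_overlap_isInfix
  have hs' : (s.length : ℝ) + 1 ≤ 3 := by norm_cast; omega
  have := one_div_le_one_div_of_le (by positivity) hs'
  linarith

theorem not_cube_isInfix (hw : PowerFree (7 / 3) w) (a : Bool) : ¬ [a, a, a] <:+: w :=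
  hw.not_short_overlap_isInfix a (s := []) (by simp)

theorem mem_of_three_le_length (hw : PowerFree (7 / 3) w) (hlen : 3 ≤ w.length) (b : Bool) :
    b ∈ w := by
  by_contra hb
  have hconst : w = List.replicate w.length (!b) :=
    List.eq_replicate_length.2 fun c hc ↦ Bool.eq_not.2 fun hcb ↦ hb (hcb ▸ hc)
  obtain ⟨n, hn⟩ := Nat.exists_eq_add_of_le hlen
  have hcube : [!b, !b, !b] <:+: w :=
    ⟨[], List.replicate n (!b), by rw [hconst, hn, List.replicate_add]; rfl⟩
  exact hw.not_cube_isInfix (!b) hcube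

theorem eq_not_of_doubled {a e : Bool} {t : List Bool}
    (hw : PowerFree (7 / 3) (a :: a :: e :: t)) : e = !a := by
  refine Bool.eq_not.2 fun hea ↦ ?_
  subst hea
  exact hw.not_cube_isInfix e ⟨[], t, rfl⟩

-- If `f = a`, excluding cubes forces `c = g = !a`, and the word starts with a `7/3`-power of
-- period 3.
theorem eq_not_of_interior_doubled {a c f g : Bool} {t : List Bool}
    (hw : PowerFree (7 / 3) (c :: a :: a :: (!a) :: a :: f :: g :: t)) : f = !a := by
  refine Bool.eq_not.2 fun hfa ↦ ?_
  subst hfa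
  have htail : PowerFree (7 / 3) (f :: f :: g :: t) :=
    hw.of_isInfix (List.suffix_append [c, f, f, !f] _).isInfix
  have hg : g = !f := htail.eq_not_of_doubled
  have hc : c = !f := by
    refine Bool.eq_not.2 fun hcf ↦ ?_
    subst hcf
    exact hw.not_cube_isInfix c ⟨[], _, rfl⟩
  subst hg hc
  have hperiod : [!f, f, f, !f, f, f, !f] <:+: (!f) :: f :: f :: (!f) :: f :: f :: (!f) :: t :=
    ⟨[], t, rfl⟩
  exact hw.not_short_overlap_isInfix (!f) (s := [f, f]) (by simp) hperiod

-- The blocks of `μ(y)` start right after `aa`, so the doubled letter has the wrong parity. This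
-- forces `|y| ≤ 1`, and a word that short can also be cut one letter earlier.
theorem exists_cons_mu_append_of_doubled {a c d : Bool} {y z : List Bool} (hz : z.length ≤ 1)
    (hw : PowerFree (7 / 3) (c :: a :: a :: (mu y ++ z ++ [d]))) :
    ∃ y' z' : List Bool, z'.length ≤ 1 ∧ a :: (mu y ++ z) = mu y' ++ z' := by
  have htail : PowerFree (7 / 3) (a :: a :: (mu y ++ z ++ [d])) :=
    hw.of_isInfix (List.suffix_cons ..).isInfix
  match y, z, hz with
  | [], [], _ => exact ⟨[], [a], by simp, rfl⟩
  | [], [e], _ =>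
    obtain rfl : e = !a := htail.eq_not_of_doubled
    exact ⟨[a], [], by simp, by simp [mu_cons, mu_nil]⟩
  | e :: y, z, hz =>
    rw [mu_cons] at hw htail
    obtain rfl : e = !a := htail.eq_not_of_doubled
    rw [Bool.not_not] at hw
    match y, z, hz with
    | [], [], _ => exact ⟨[a], [a], by simp, by simp [mu_cons, mu_nil]⟩
    | [], [f], _ =>
      obtain rfl : f = !a := hw.eq_not_of_interior_doubled
      exact ⟨[a, a], [], by simp, by simp [mu_cons, mu_nil]⟩
    | f :: y, z, _ =>
      rw [mu_cons] at hw
      obtain rfl : f = !a := hw.eq_not_of_interior_doubled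
      rw [Bool.not_not] at hw
      have halternating : [a, !a, a, !a, a] <:+:
          c :: a :: a :: ((!a) :: a :: (!a) :: a :: mu y ++ z ++ [d]) :=
        ⟨[c, a], mu y ++ z ++ [d], by simp⟩
      exact absurd halternating (hw.not_short_overlap_isInfix a (s := [!a]) (by simp))

theorem exists_interior_eq_append_mu_append {c d : Bool} {v : List Bool}
    (hv : PowerFree (7 / 3) (c :: (v ++ [d]))) :
    ∃ x y z : List Bool, x.length ≤ 1 ∧ z.length ≤ 1 ∧ v = x ++ mu y ++ z := by
  induction v generalizing c with
  | nil => exact ⟨[], [], [], by simp, by simp, rfl⟩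
  | cons a v ih =>
    obtain ⟨x, y, z, hx, hz, rfl⟩ := ih (hv.of_isInfix (List.suffix_cons ..).isInfix)
    match x, hx with
    | [], _ => exact ⟨[a], y, z, by simp, hz, rfl⟩
    | [e], _ =>
      rcases Bool.eq_or_eq_not e a with rfl | rfl
      · obtain ⟨y', z', hz', h⟩ := hv.exists_cons_mu_append_of_doubled hz
        exact ⟨[e], y', z', by simp, hz', by simpa using h⟩
      · exact ⟨[], a :: y, z, by simp, hz, by simp [mu_cons]⟩

theorem exists_eq_append_mu_append (hw : PowerFree (7 / 3) w) :
    ∃ x y z : List Bool, x.length ≤ 2 ∧ z.length ≤ 2 ∧ w = x ++ mu y ++ z := by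
  match w with
  | [] => exact ⟨[], [], [], by simp, by simp, rfl⟩
  | c :: u =>
    rcases List.eq_nil_or_concat' u with rfl | ⟨v, d, rfl⟩
    · exact ⟨[], [], [c], by simp, by simp, rfl⟩
    · obtain ⟨x, y, z, hx, hz, rfl⟩ := hw.exists_interior_eq_append_mu_append
      exact ⟨c :: x, y, z ++ [d], by simpa using hx, by simpa using hz, by simp⟩

end PowerFree

theorem long_power_free_contains_mu_cubed_general (k : ℕ) (w : List Bool)
    (hw : PowerFree (7 / 3 : ℝ) w) (hlen : 7 * 2 ^ k ≤ w.length + 4) (b : Bool) :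
    mu^[k] [b] <:+: w := by
  induction k generalizing w with
  | zero => exact (List.singleton_infix_iff b w).2 (hw.mem_of_three_le_length (by omega) b)
  | succ k ih =>
    obtain ⟨x, y, z, hx, hz, rfl⟩ := hw.exists_eq_append_mu_append
    have hmu : mu y <:+: x ++ mu y ++ z := ⟨x, z, rfl⟩
    simp only [List.length_append, length_mu, pow_succ] at hlen
    rw [Function.iterate_succ_apply']
    exact (mu_isInfix_mu (ih y (hw.of_isInfix hmu).of_mu (by omega))).trans hmu

/-- Every `7/3`-power-free binary word of length at least 52 contains both
`μ³(0) = 01101001` and `μ³(1) = 10010110` as subwords. -/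
theorem long_power_free_contains_mu_cubed (w : List Bool)
    (hw : PowerFree (7/3 : ℝ) w) (hlen : 52 ≤ w.length) :
    w01101001 <:+: w ∧ w10010110 <:+: w := by
  have hlen' : 7 * 2 ^ 3 ≤ w.length + 4 := by omega
  exact ⟨long_power_free_contains_mu_cubed_general 3 w hw hlen' false,
    long_power_free_contains_mu_cubed_general 3 w hw hlen' true⟩
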